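/- arXiv:2604.10203 — 2 statements merged into one kernel-verified Lean document; each statement's English description precedes it below -/
import Mathlib

section
/- Let K ≥ 1, let G : Fin K → ℝ be positive, and let P > 0. For every feasible power allocation P : Fin K → ℝ (i.e., P_k ≥ 0 for all k and ∑_{k=1}^K P_k ≤ P), the minimum weighted power satisfies min_{k} P_k · G_k ≤ P / (∑_{j=1}^K 1/G_j). Consequently the optimal value of the max-min power allocation problem for a fixed beamformer is t* = P / (∑_{j=1}^K 1/G_j). -/
/-- For positive gains `G` and power budget `P > 0`, every feasible power
allocation (`P_k ≥ 0`, `∑ P_k ≤ P`) satisfies `min_k P_k G_k ≤ P / (∑_j 1/G_j)`;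
consequently the optimal value of the max-min power allocation problem is
`t* = P / (∑_j 1/G_j)`. -/
theorem stmt_1 (K : ℕ) (hK : 1 ≤ K) (G : Fin K → ℝ) (hG : ∀ k, 0 < G k)
    (P : ℝ) (hP : 0 < P) :
    (∀ Pw : Fin K → ℝ, (∀ k, 0 ≤ Pw k) → (∑ k, Pw k ≤ P) →
      (⨅ k, Pw k * G k) ≤ P / (∑ j, 1 / G j)) ∧
    IsGreatest {t : ℝ | ∃ Pw : Fin K → ℝ, (∀ k, 0 ≤ Pw k) ∧ (∑ k, Pw k ≤ P) ∧
      (⨅ k, Pw k * G k) = t} (P / (∑ j, 1 / G j)) := by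
  have : Nonempty (Fin K) := ⟨⟨0, hK⟩⟩
  have hS : 0 < ∑ j, 1 / G j :=
    Finset.sum_pos (fun j _ => one_div_pos.mpr (hG j)) Finset.univ_nonempty
  have hbound : ∀ Pw : Fin K → ℝ, (∀ k, 0 ≤ Pw k) → (∑ k, Pw k ≤ P) →
      (⨅ k, Pw k * G k) ≤ P / (∑ j, 1 / G j) := by
    intro Pw _ hsum
    rw [le_div_iff₀ hS, Finset.mul_sum]
    refine (Finset.sum_le_sum fun k _ => ?_).trans hsum
    rw [mul_one_div, div_le_iff₀ (hG k)]
    exact ciInf_le (Set.finite_range _).bddBelow k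
  refine ⟨hbound, ⟨fun k => P / (∑ j, 1 / G j) * (1 / G k), fun k => ?_, ?_, ?_⟩, ?_⟩
  · exact mul_nonneg (div_pos hP hS).le (one_div_pos.mpr (hG k)).le
  · rw [← Finset.mul_sum, div_mul_cancel₀ _ hS.ne']
  · have hconst : ∀ k, P / (∑ j, 1 / G j) * (1 / G k) * G k = P / (∑ j, 1 / G j) :=
      fun k => by rw [mul_assoc, one_div_mul_cancel (hG k).ne', mul_one]
    simp only [hconst, ciInf_const]
  · rintro t ⟨Pw, hnonneg, hsum, rfl⟩
    exact hbound Pw hnonneg hsum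
end

section
/- Let h_1, …, h_K ∈ ℂ^N be channel vectors, let R_k = Re(h_k h_kᴴ) (the entrywise real part of the rank-one Hermitian matrix h_k h_kᴴ), and set R = ∑_{k=1}^K R_k. Let w ∈ {−1,+1}^N and suppose wᵀ R_k w > 0 for every k. Fix a partition of {1,…,N} into 𝒢 and ℋ with |ℋ| = N − d, and let UB_tot = ∑_{g,g'∈𝒢} w_g R_{g,g'} w_{g'} + 2 · ∑_{h∈ℋ} |∑_{g∈𝒢} w_g R_{g,h}| + (N − d) · λ_max(R_{ℋℋ}). Then the objective f(w) = ∑_{k=1}^K 1/(wᵀ R_k w) satisfies f(w) ≥ K² / UB_tot. -/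
/-- The largest eigenvalue of a real square matrix, viewed as the supremum of the set of
eigenvalues of the associated linear endomorphism. -/
noncomputable def lamMax {n : Type*} [Fintype n] [DecidableEq n]
    (A : Matrix n n ℝ) : ℝ :=
  sSup {μ : ℝ | Module.End.HasEigenvalue (Matrix.toLin' A) μ}

/-- Rayleigh bound: the quadratic form of a real symmetric matrix is at most the largest
eigenvalue times the squared Euclidean norm. -/
theorem dotProduct_mulVec_le_lamMax {n : Type*} [Fintype n] [DecidableEq n]
    {A : Matrix n n ℝ} (hA : A.IsHermitian) (x : n → ℝ) :
    x ⬝ᵥ A.mulVec x ≤ lamMax A * (x ⬝ᵥ x) := by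
  have hB : (lamMax A • (1 : Matrix n n ℝ) - A).IsHermitian :=
    (Matrix.isHermitian_one.smul (IsSelfAdjoint.all _)).sub hA
  have hbdd : BddAbove {μ : ℝ | Module.End.HasEigenvalue (Matrix.toLin' A) μ} :=
    (Module.End.finite_hasEigenvalue (Matrix.toLin' A)).bddAbove
  have hpsd : (lamMax A • (1 : Matrix n n ℝ) - A).PosSemidef := by
    refine hB.posSemidef_iff_eigenvalues_nonneg.mpr fun i => ?_
    have hev := hB.mulVec_eigenvectorBasis i
    have hne : (hB.eigenvectorBasis i).ofLp ≠ 0 := by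
      simpa using hB.eigenvectorBasis.toBasis.ne_zero i
    have hle : lamMax A - hB.eigenvalues i ≤ lamMax A := by
      refine le_csSup hbdd (Module.End.hasEigenvalue_of_hasEigenvector
        (x := (hB.eigenvectorBasis i).ofLp) ⟨Module.End.mem_eigenspace_iff.mpr ?_, hne⟩)
      rw [Matrix.sub_mulVec, Matrix.smul_mulVec, Matrix.one_mulVec] at hev
      rw [Matrix.toLin'_apply, sub_smul, ← hev]
      abel
    simpa using hle
  have hx := hpsd.dotProduct_mulVec_nonneg x
  simp only [star_trivial, Matrix.sub_mulVec, Matrix.smul_mulVec, Matrix.one_mulVec,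
    dotProduct_sub, dotProduct_smul, smul_eq_mul] at hx
  linarith

/-- Splitting the quadratic form of a symmetric matrix along a partition of the indices. -/
theorem sum_sum_union_of_symm {n : Type*} [DecidableEq n] {A : Matrix n n ℝ}
    (hA : ∀ i j, A i j = A j i) (w : n → ℝ) {G H : Finset n} (hGH : Disjoint G H) :
    ∑ i ∈ G ∪ H, ∑ j ∈ G ∪ H, w i * A i j * w j =
      (∑ i ∈ G, ∑ j ∈ G, w i * A i j * w j) +
        2 * (∑ j ∈ H, (∑ i ∈ G, w i * A i j) * w j) +
        ∑ i ∈ H, ∑ j ∈ H, w i * A i j * w j := by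
  have hGsum : ∑ i ∈ G, ∑ j ∈ H, w i * A i j * w j =
      ∑ j ∈ H, (∑ i ∈ G, w i * A i j) * w j := by
    rw [Finset.sum_comm]
    simp_rw [Finset.sum_mul]
  have hHsum : ∑ i ∈ H, ∑ j ∈ G, w i * A i j * w j =
      ∑ j ∈ H, (∑ i ∈ G, w i * A i j) * w j := by
    simp_rw [Finset.sum_mul]
    refine Finset.sum_congr rfl fun i _ => Finset.sum_congr rfl fun j _ => ?_
    rw [hA i j]
    ring
  simp_rw [Finset.sum_union hGH, Finset.sum_add_distrib]
  rw [hGsum, hHsum]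
  ring

/-- With `R_k = Re(h_k h_kᴴ)`, `R = ∑_k R_k`, a `±1` beamformer `w`
satisfying `wᵀR_k w > 0` for all `k`, a partition of the indices into the fixed set `𝒢`
(of size `d`) and the free set `ℋ`, and the branch-and-bound upper bound
`UB_tot = C_tot + 2∑_{h∈ℋ}|∑_{g∈𝒢} w_g R_{g,h}| + (N−d)λ_max(R_{ℋℋ})`, the objective
`f(w) = ∑_k 1/(wᵀR_k w)` satisfies `f(w) ≥ K²/UB_tot`. -/
theorem stmt_6 (N K d : ℕ) (hK : 1 ≤ K)
    (h : Fin K → Fin N → ℂ)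
    (R : Fin K → Matrix (Fin N) (Fin N) ℝ)
    (hRk : ∀ k, R k = Matrix.of fun i j => (h k i * star (h k j)).re)
    (Rs : Matrix (Fin N) (Fin N) ℝ) (hRs : Rs = ∑ k, R k)
    (w : Fin N → ℝ) (hw : ∀ n, w n = 1 ∨ w n = -1)
    (hpos : ∀ k, 0 < ∑ i, ∑ j, w i * R k i j * w j)
    (G H : Finset (Fin N)) (hdisj : Disjoint G H) (hcover : G ∪ H = Finset.univ)
    (hcardG : G.card = d)
    (UBtot : ℝ)
    (hUB : UBtot = (∑ g ∈ G, ∑ g' ∈ G, w g * Rs g g' * w g') +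
        2 * ∑ i ∈ H, |∑ g ∈ G, w g * Rs g i| +
        ((N : ℝ) - d) * lamMax (Rs.submatrix (fun i : ↥H => i.1) (fun i : ↥H => i.1))) :
    ∑ k, 1 / (∑ i, ∑ j, w i * R k i j * w j) ≥ (K : ℝ) ^ 2 / UBtot := by
  have hsymm : ∀ i j, Rs i j = Rs j i := fun i j => by
    simp only [hRs, hRk, Matrix.sum_apply, Matrix.of_apply]
    refine Finset.sum_congr rfl fun k _ => ?_
    simp only [RCLike.star_def, Complex.mul_re, Complex.conj_re, Complex.conj_im]
    ring
  have htotal : ∑ k, ∑ i, ∑ j, w i * R k i j * w j = ∑ i, ∑ j, w i * Rs i j * w j := by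
    simp_rw [hRs, Matrix.sum_apply, Finset.mul_sum, Finset.sum_mul]
    rw [Finset.sum_comm]
    exact Finset.sum_congr rfl fun i _ => Finset.sum_comm
  have hcard : (H.card : ℝ) = (N : ℝ) - d := by
    have hsum := Finset.card_union_of_disjoint hdisj
    rw [hcover, Finset.card_univ, Fintype.card_fin, hcardG] at hsum
    exact eq_sub_of_add_eq' (mod_cast hsum.symm)
  have hfree : ∑ i ∈ H, ∑ j ∈ H, w i * Rs i j * w j ≤ ((N : ℝ) - d) *
      lamMax (Rs.submatrix (fun i : ↥H => i.1) (fun i : ↥H => i.1)) := by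
    have hherm : (Rs.submatrix (fun i : ↥H => i.1) (fun i : ↥H => i.1)).IsHermitian :=
      Matrix.IsHermitian.ext fun i j => by simp [hsymm j.1 i.1]
    have hquad := dotProduct_mulVec_le_lamMax hherm fun i => w i.1
    have hnorm : (fun i : ↥H => w i.1) ⬝ᵥ (fun i : ↥H => w i.1) = (N : ℝ) - d := by
      have hone : ∀ n, w n * w n = 1 := fun n => by rcases hw n with hn | hn <;> simp [hn]
      simp [dotProduct, hone, ← hcard]
    rw [hnorm, mul_comm] at hquad
    refine le_of_eq_of_le ?_ hquad
    simp only [dotProduct, Matrix.mulVec, Matrix.submatrix_apply, Finset.mul_sum, mul_assoc]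
    rw [← Finset.sum_coe_sort H]
    exact Finset.sum_congr rfl fun i _ => (Finset.sum_coe_sort H _).symm
  have hcross : ∑ j ∈ H, (∑ g ∈ G, w g * Rs g j) * w j ≤ ∑ i ∈ H, |∑ g ∈ G, w g * Rs g i| := by
    refine Finset.sum_le_sum fun j _ => ?_
    rcases hw j with hj | hj <;> rw [hj]
    · simpa using le_abs_self _
    · simpa using neg_le_abs (∑ g ∈ G, w g * Rs g j)
  have hle : ∑ k, ∑ i, ∑ j, w i * R k i j * w j ≤ UBtot := by
    have hsplit := sum_sum_union_of_symm hsymm w hdisj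
    rw [hcover] at hsplit
    rw [htotal, hsplit, hUB]
    gcongr
  have hsumpos : 0 < ∑ k, ∑ i, ∑ j, w i * R k i j * w j :=
    Finset.sum_pos (fun k _ => hpos k) ⟨⟨0, hK⟩, Finset.mem_univ _⟩
  calc (K : ℝ) ^ 2 / UBtot
      ≤ (K : ℝ) ^ 2 / ∑ k, ∑ i, ∑ j, w i * R k i j * w j := by gcongr
    _ ≤ ∑ k, 1 / (∑ i, ∑ j, w i * R k i j * w j) := by
      simpa using Finset.sq_sum_div_le_sum_sq_div Finset.univ (fun _ : Fin K => (1 : ℝ))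
        fun k _ => hpos k
end
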